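/- Aubin–Nitsche lemma: for every g ∈ H let φ_g ∈ V be the unique solution of the adjoint problem a(w, φ_g) = ⟨g, ι w⟩_H for all w ∈ V (which exists by the Lax–Milgram theorem applied to (v,w) ↦ a(w,v)). Then ‖ι(u − u_h)‖_H ≤ c₂ · ‖u − u_h‖_V · sup over g ∈ H with g ≠ 0 of ( (1/‖g‖_H) · inf over v_h ∈ V_h of ‖φ_g − v_h‖_V ). -/

import Mathlib

/-- **Aubin–Nitsche lemma.** Let `ι : V → H` be a continuous embedding of Hilbert
spaces, `u` the solution of the variational problem and `u_h` its Galerkin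
approximation in `V_h`. For each `g ∈ H` let `φ g` solve the adjoint problem
`a(w, φ g) = ⟨g, ι w⟩_H` for all `w ∈ V`. Then
`‖ι(u − u_h)‖_H ≤ c₂ · ‖u − u_h‖_V · sup_{g ≠ 0} ( (1/‖g‖_H) · inf_{v_h ∈ V_h} ‖φ g − v_h‖_V )`. -/
theorem aubin_nitsche
    {V H : Type*} [NormedAddCommGroup V] [InnerProductSpace ℝ V] [CompleteSpace V]
    [NormedAddCommGroup H] [InnerProductSpace ℝ H] [CompleteSpace H]
    (ι : V →L[ℝ] H) (hι : Function.Injective ι)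
    (a : V →ₗ[ℝ] V →ₗ[ℝ] ℝ) (F : V →L[ℝ] ℝ)
    (c₁ c₂ : ℝ) (hc₁ : 0 < c₁) (hc₂ : 0 < c₂)
    (hcoer : ∀ v : V, c₁ * ‖v‖ ^ 2 ≤ a v v)
    (hcont : ∀ v w : V, a v w ≤ c₂ * ‖v‖ * ‖w‖)
    (Vh : Submodule ℝ V) (hVh : IsClosed (Vh : Set V))
    (u : V) (hu : ∀ v : V, a u v = F v)
    (uh : Vh) (huh : ∀ vh : Vh, a (uh : V) (vh : V) = F (vh : V))
    (φ : H → V) (hφ : ∀ (g : H) (w : V), a w (φ g) = (inner ℝ g (ι w) : ℝ)) :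
    ‖ι (u - (uh : V))‖ ≤ c₂ * ‖u - (uh : V)‖ *
      sSup {r : ℝ | ∃ g : H, g ≠ 0 ∧
        r = (1 / ‖g‖) * ⨅ vh : Vh, ‖φ g - (vh : V)‖} := by
  set e : V := u - (uh : V) with he
  have horth : ∀ vh : Vh, a e (vh : V) = 0 := by
    intro vh
    rw [he, map_sub, LinearMap.sub_apply, hu, huh, sub_self]
  have hbdd_inf : ∀ g : H, BddBelow (Set.range fun vh : Vh => ‖φ g - (vh : V)‖) := by
    intro g
    refine ⟨0, ?_⟩
    rintro _ ⟨vh, rfl⟩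
    exact norm_nonneg _
  have hφb : ∀ g : H, ‖φ g‖ ≤ ‖g‖ * (‖ι‖ / c₁) := by
    intro g
    rcases (norm_nonneg (φ g)).eq_or_lt with h0 | hpos
    · rw [← h0]; positivity
    · have h1 := hcoer (φ g)
      rw [hφ] at h1
      have h2 := real_inner_le_norm g (ι (φ g))
      have h3 : ‖g‖ * ‖ι (φ g)‖ ≤ ‖g‖ * (‖ι‖ * ‖φ g‖) :=
        mul_le_mul_of_nonneg_left (ι.le_opNorm _) (norm_nonneg _)
      have h4 : (c₁ * ‖φ g‖) * ‖φ g‖ ≤ (‖g‖ * ‖ι‖) * ‖φ g‖ := by nlinarith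
      have h5 := le_of_mul_le_mul_right h4 hpos
      rw [← mul_div_assoc, le_div_iff₀ hc₁]
      linarith
  have hbdd : BddAbove {r : ℝ | ∃ g : H, g ≠ 0 ∧
        r = (1 / ‖g‖) * ⨅ vh : Vh, ‖φ g - (vh : V)‖} := by
    refine ⟨‖ι‖ / c₁, ?_⟩
    rintro r ⟨g, hg, rfl⟩
    have hgp : 0 < ‖g‖ := norm_pos_iff.mpr hg
    have h1 : (⨅ vh : Vh, ‖φ g - (vh : V)‖) ≤ ‖φ g‖ := by
      have := ciInf_le (hbdd_inf g) (0 : Vh)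
      simpa using this
    rw [one_div, inv_mul_le_iff₀ hgp]
    exact h1.trans (hφb g)
  by_cases hz : ι e = 0
  · rw [hz, norm_zero]
    refine mul_nonneg (by positivity) (Real.sSup_nonneg ?_)
    rintro r ⟨g, hg, rfl⟩
    exact mul_nonneg (by positivity) (Real.iInf_nonneg fun _ => norm_nonneg _)
  · have hgp : 0 < ‖ι e‖ := norm_pos_iff.mpr hz
    have hep : 0 < ‖e‖ := by
      rw [norm_pos_iff]
      rintro h
      exact hz (by rw [h, map_zero])
    have hK : 0 < c₂ * ‖e‖ := by positivity
    have h1 : ‖ι e‖ ^ 2 / (c₂ * ‖e‖) ≤ ⨅ vh : Vh, ‖φ (ι e) - (vh : V)‖ := by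
      refine le_ciInf fun vh => ?_
      rw [div_le_iff₀' hK]
      have h := hcont e (φ (ι e) - (vh : V))
      rw [map_sub, horth, sub_zero, hφ, real_inner_self_eq_norm_sq] at h
      exact h
    have h2 := le_csSup hbdd ⟨ι e, hz, rfl⟩
    refine le_trans ?_ (mul_le_mul_of_nonneg_left h2 hK.le)
    rw [div_le_iff₀' hK] at h1
    rw [mul_left_comm, one_div, le_inv_mul_iff₀ hgp, ← sq]
    exact h1
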